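/- Let g be a Lie algebra over a field of characteristic zero and h ⊂ g a finite-dimensional subalgebra admitting an ad(h)-invariant complement V (g = h ⊕ V as h-modules). Then H^m(W(g,h)) = 0 for all odd m, and for each j ≥ 0 the restriction map W^{0,j}(g,h) = (S^j g)^{*h} → (S^j h)^{*h} induces an isomorphism H^{2j}(W(g,h)) ≅ (S^j h)^{*h}. -/

import Mathlib

noncomputable section

section Weil

variable (F : Type*) [Field F] (g : Type*) [LieRing g] [LieAlgebra F g]

/-- The tuple `(br, v_0, …, v̂_i, …, v̂_j, …, v_d)` (`i < j`) used in the
Chevalley–Eilenberg differential. -/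
def pairTupleW {G : Type*} (d : ℕ) (v : Fin (d+1) → G) (br : G) (i j : Fin (d+1)) :
    Fin d → G :=
  fun m =>
    if hm : m.1 = 0 then br
    else if h1 : m.1 - 1 < i.1 then v ⟨m.1 - 1, by have := i.2; omega⟩
    else if h2 : m.1 < j.1 then v ⟨m.1, by have := j.2; omega⟩
    else v ⟨m.1 + 1, by have := m.2; omega⟩

/-- The (relative) Chevalley–Eilenberg differential `d_Lie` on cochains with values in
`(S^j g)^*` (coadjoint action extended to the symmetric power). -/
def dLieS (k j : ℕ) (c : (Fin k → g) → (Fin j → g) → F) :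
    (Fin (k+1) → g) → (Fin j → g) → F :=
  fun v w =>
    (∑ i : Fin (k+1), (-1:F)^(i.1+1) *
      ∑ r : Fin j, c (v ∘ i.succAbove) (Function.update w r ⁅v i, w r⁆))
    + ∑ i : Fin (k+1), ∑ l : Fin (k+1),
        (if i < l then (-1:F)^(i.1+l.1) * c (pairTupleW k v ⁅v i, v l⁆ i l) w else 0)

/-- The Koszul piece `d'` of the Weil differential:
`d'c(v ⊗ w_1⋯w_{j+1}) = ∑_k c(π(w_k)∧v ⊗ w_1⋯ŵ_k⋯w_{j+1})`. -/
def dKoszul (i j : ℕ) (c : (Fin (i+1) → g) → (Fin j → g) → F) :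
    (Fin i → g) → (Fin (j+1) → g) → F :=
  fun v w => ∑ r : Fin (j+1), c (Fin.cons (w r) v) (w ∘ r.succAbove)

variable (h : LieSubalgebra F g)

/-- An element of `W^{i,j}(g,h) = (Λ^i(g/h)⊗S^j g)^{*h}`: a functional, multilinear and
alternating in the first block, multilinear and symmetric in the second block, vanishing
whenever a first-block argument lies in `h`, and `h`-invariant. -/
def IsWCochain (i j : ℕ) (c : (Fin i → g) → (Fin j → g) → F) : Prop :=
  (∀ (v : Fin i → g) (t : Fin i) (x y : g) (w : Fin j → g),
      c (Function.update v t (x + y)) w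
        = c (Function.update v t x) w + c (Function.update v t y) w) ∧
  (∀ (v : Fin i → g) (t : Fin i) (s : F) (x : g) (w : Fin j → g),
      c (Function.update v t (s • x)) w = s * c (Function.update v t x) w) ∧
  (∀ (v : Fin i → g) (t t' : Fin i) (w : Fin j → g), t ≠ t' → v t = v t' → c v w = 0) ∧
  (∀ (v : Fin i → g) (w : Fin j → g) (r : Fin j) (x y : g),
      c v (Function.update w r (x + y))
        = c v (Function.update w r x) + c v (Function.update w r y)) ∧
  (∀ (v : Fin i → g) (w : Fin j → g) (r : Fin j) (s : F) (x : g),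
      c v (Function.update w r (s • x)) = s * c v (Function.update w r x)) ∧
  (∀ (v : Fin i → g) (w : Fin j → g) (ρ : Equiv.Perm (Fin j)), c v (w ∘ ρ) = c v w) ∧
  (∀ (v : Fin i → g) (t : Fin i) (w : Fin j → g), v t ∈ h → c v w = 0) ∧
  (∀ X ∈ h, ∀ (v : Fin i → g) (w : Fin j → g),
      (∑ t : Fin i, c (Function.update v t ⁅X, v t⁆) w)
        + (∑ r : Fin j, c v (Function.update w r ⁅X, w r⁆)) = 0)

/-- An element of the relative Weil algebra `W(g,h)` of total degree `m`, presented by its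
components `W i j ∈ W^{i,j}(g,h)` (`i + 2j = m`, the other components being zero). -/
def IsWElt (m : ℕ) (W : ∀ i j : ℕ, (Fin i → g) → (Fin j → g) → F) : Prop :=
  (∀ i j, IsWCochain F g h i j (W i j)) ∧ (∀ i j, i + 2*j ≠ m → W i j = 0)

/-- The Weil differential `d = d_Lie + d'`. -/
def dWeil (W : ∀ i j : ℕ, (Fin i → g) → (Fin j → g) → F) :
    ∀ i j : ℕ, (Fin i → g) → (Fin j → g) → F :=
  fun i j =>
    (match i with
     | 0 => 0
     | (i'+1) => dLieS F g i' j (W i' j)) +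
    (match j with
     | 0 => 0
     | (j'+1) => dKoszul F g i j' (W (i+1) j'))

/-- `W` is a coboundary in the relative Weil algebra (in total degree `m`). -/
def IsWCobd : (m : ℕ) → (∀ i j : ℕ, (Fin i → g) → (Fin j → g) → F) → Prop
  | 0, W => ∀ i j, W i j = 0
  | (m'+1), W => ∃ W', IsWElt F g h m' W' ∧ dWeil F g W' = W

/-- An (extension to `g` of an) invariant polynomial `Q ∈ (S^j h)^{*h}`: a symmetric
multilinear form, `ad h`-invariant on `h`-tuples. -/
def IsSymPoly (j : ℕ) (Q : (Fin j → g) → F) : Prop :=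
  (∀ (w : Fin j → g) (r : Fin j) (x y : g),
      Q (Function.update w r (x + y))
        = Q (Function.update w r x) + Q (Function.update w r y)) ∧
  (∀ (w : Fin j → g) (r : Fin j) (s : F) (x : g),
      Q (Function.update w r (s • x)) = s * Q (Function.update w r x)) ∧
  (∀ (w : Fin j → g) (ρ : Equiv.Perm (Fin j)), Q (w ∘ ρ) = Q w) ∧
  (∀ X ∈ h, ∀ w : Fin j → g, (∀ r, w r ∈ h) →
      ∑ r : Fin j, Q (Function.update w r ⁅X, w r⁆) = 0)

end Weil

section WeilProof

set_option linter.unusedSectionVars false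

/-- Families of functions indexed by bidegree. -/
abbrev WFam (F : Type*) (g : Type*) : Type _ :=
  ∀ i j : ℕ, (Fin i → g) → (Fin j → g) → F

variable {F : Type*} [Field F] {g : Type*} [LieRing g] [LieAlgebra F g]

/-- Contraction by `x` in the exterior block. -/
def io (x : g) : WFam F g →ₗ[F] WFam F g where
  toFun W := fun i j v w => W (i+1) j (Fin.cons x v : Fin (i+1) → g) w
  map_add' _ _ := rfl
  map_smul' _ _ := rfl

/-- Contraction by `x` in the symmetric block. -/
def ka (x : g) : WFam F g →ₗ[F] WFam F g where
  toFun W := fun i j v w => W i (j+1) v (Fin.cons x w : Fin (j+1) → g)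
  map_add' _ _ := rfl
  map_smul' _ _ := rfl

/-- Derivation extension of a map `φ`. -/
def der (φ : g → g) : WFam F g →ₗ[F] WFam F g where
  toFun W := fun i j v w =>
    (∑ t : Fin i, W i j (Function.update v t (φ (v t))) w)
      + (∑ r : Fin j, W i j v (Function.update w r (φ (w r))))
  map_add' W W' := by
    funext i j v w
    simp only [Pi.add_apply, Finset.sum_add_distrib]
    ring
  map_smul' s W := by
    funext i j v w
    simp only [Pi.smul_apply, smul_eq_mul, RingHom.id_apply, Finset.mul_sum, mul_add]

/-- The Lie part of the Weil differential. -/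
def dL : WFam F g →ₗ[F] WFam F g where
  toFun W := fun i j => match i with
     | 0 => 0
     | (i'+1) => dLieS F g i' j (W i' j)
  map_add' W W' := by
    funext i j
    cases i with
    | zero => simp
    | succ i =>
      funext v w
      simp only [dLieS, Pi.add_apply, Finset.sum_add_distrib, mul_add]
      rw [add_add_add_comm]
      congr 1
      rw [← Finset.sum_add_distrib]
      refine Finset.sum_congr rfl fun a _ => ?_
      rw [← Finset.sum_add_distrib]
      refine Finset.sum_congr rfl fun b _ => ?_
      split_ifs <;> simp
  map_smul' s W := by
    funext i j
    cases i with
    | zero => simp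
    | succ i =>
      funext v w
      simp only [dLieS, Pi.smul_apply, smul_eq_mul, RingHom.id_apply, Finset.mul_sum, mul_add]
      congr 1
      · refine Finset.sum_congr rfl fun a _ => Finset.sum_congr rfl fun b _ => by ring
      · refine Finset.sum_congr rfl fun a _ => Finset.sum_congr rfl fun b _ => ?_
        split_ifs
        · ring
        · simp

/-- The Koszul part of the Weil differential. -/
def dK : WFam F g →ₗ[F] WFam F g where
  toFun W := fun i j => match j with
     | 0 => 0
     | (j'+1) => dKoszul F g i j' (W (i+1) j')
  map_add' W W' := by
    funext i j
    cases j with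
    | zero => simp
    | succ j =>
      funext v w
      simp only [dKoszul, Pi.add_apply, Finset.sum_add_distrib]
  map_smul' s W := by
    funext i j
    cases j with
    | zero => simp
    | succ j =>
      funext v w
      simp only [dKoszul, Pi.smul_apply, smul_eq_mul, RingHom.id_apply, Finset.mul_sum]

/-- The Koszul homotopy attached to a map `p`. -/
def sH (p : g → g) : WFam F g →ₗ[F] WFam F g where
  toFun W := fun i j => match i with
     | 0 => 0
     | (i'+1) => fun v w => ∑ k : Fin (i'+1), (-1:F)^(k.1) *
        W i' (j+1) (v ∘ k.succAbove) (Fin.cons (p (v k)) w : Fin (j+1) → g)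
  map_add' W W' := by
    funext i j
    cases i with
    | zero => simp
    | succ i =>
      funext v w
      simp only [Pi.add_apply, mul_add, Finset.sum_add_distrib]
  map_smul' s W := by
    funext i j
    cases i with
    | zero => simp
    | succ i =>
      funext v w
      simp only [Pi.smul_apply, smul_eq_mul, RingHom.id_apply, Finset.mul_sum]
      refine Finset.sum_congr rfl fun a _ => by ring

theorem dWeil_eq (W : WFam F g) : dWeil F g W = dL W + dK W := rfl

theorem io_ext {W W' : WFam F g} {k j : ℕ} (H : ∀ x, io x W k j = io x W' k j) :
    W (k+1) j = W' (k+1) j := by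
  funext v w
  have := congrFun (congrFun (H (v 0)) (Fin.tail v)) w
  simpa only [io, LinearMap.coe_mk, AddHom.coe_mk, Fin.cons_self_tail] using this

theorem ka_ext {W W' : WFam F g} {k j : ℕ} (H : ∀ x, ka x W k j = ka x W' k j) :
    W k (j+1) = W' k (j+1) := by
  funext v w
  have := congrFun (congrFun (H (w 0)) v) (Fin.tail w)
  simpa only [ka, LinearMap.coe_mk, AddHom.coe_mk, Fin.cons_self_tail] using this

theorem io_ka (x y : g) (W : WFam F g) : io x (ka y W) = ka y (io x W) := rfl

@[simp] theorem dL_zero (W : WFam F g) (j : ℕ) : dL W 0 j = 0 := rfl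
@[simp] theorem dK_zero (W : WFam F g) (i : ℕ) : dK W i 0 = 0 := rfl
@[simp] theorem sH_zero (p : g → g) (W : WFam F g) (j : ℕ) : sH p W 0 j = 0 := rfl
theorem der_zero_zero (φ : g → g) (W : WFam F g) : der φ W 0 0 = 0 := by
  funext v w
  simp [der]

theorem io_der (φ : g → g) (x : g) (W : WFam F g) :
    io x (der φ W) = der φ (io x W) + io (φ x) W := by
  funext i j v w
  simp only [io, der, LinearMap.coe_mk, AddHom.coe_mk, Pi.add_apply, Fin.sum_univ_succ,
    Fin.cons_zero, Fin.cons_succ, Fin.update_cons_zero, Fin.cons_update]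
  ring

theorem ka_der (φ : g → g) (x : g) (W : WFam F g) :
    ka x (der φ W) = der φ (ka x W) + ka (φ x) W := by
  funext i j v w
  simp only [ka, der, LinearMap.coe_mk, AddHom.coe_mk, Pi.add_apply, Fin.sum_univ_succ,
    Fin.cons_zero, Fin.cons_succ, Fin.update_cons_zero, Fin.cons_update]
  ring

theorem cons_comp_succAbove_succ {n : ℕ} (x : g) (v : Fin (n+1) → g) (k : Fin (n+1)) :
    (Fin.cons x v : Fin (n+2) → g) ∘ k.succ.succAbove
      = (Fin.cons x (v ∘ k.succAbove) : Fin (n+1) → g) := by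
  funext t
  refine Fin.cases ?_ (fun t => ?_) t <;> simp

theorem cons_comp_succAbove_zero {n : ℕ} (x : g) (v : Fin n → g) :
    (Fin.cons x v : Fin (n+1) → g) ∘ (0 : Fin (n+1)).succAbove = v := by
  funext t
  simp

theorem ka_dK (x : g) (W : WFam F g) :
    ka x (dK W) = dK (ka x W) + io x W := by
  funext i j v w
  cases j with
  | zero =>
    simp only [ka, io, dK, dKoszul, LinearMap.coe_mk, AddHom.coe_mk, Pi.add_apply,
      Fin.sum_univ_succ, Fin.cons_zero, cons_comp_succAbove_zero]
    simp
  | succ j =>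
    simp only [ka, io, dK, dKoszul, LinearMap.coe_mk, AddHom.coe_mk, Pi.add_apply]
    rw [Fin.sum_univ_succ]
    simp only [Fin.cons_zero, Fin.cons_succ, cons_comp_succAbove_zero, cons_comp_succAbove_succ]
    ring

theorem io_sH (p : g → g) (x : g) (W : WFam F g) :
    io x (sH p W) = ka (p x) W - sH p (io x W) := by
  funext i j v w
  cases i with
  | zero =>
    simp only [ka, io, sH, LinearMap.coe_mk, AddHom.coe_mk, Pi.sub_apply,
      Fin.sum_univ_succ, Fin.cons_zero, cons_comp_succAbove_zero]
    simp
  | succ i =>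
    simp only [ka, io, sH, LinearMap.coe_mk, AddHom.coe_mk, Pi.sub_apply]
    rw [Fin.sum_univ_succ]
    simp only [Fin.cons_zero, Fin.cons_succ, cons_comp_succAbove_zero, cons_comp_succAbove_succ,
      Fin.val_zero, pow_zero, one_mul, sub_eq_add_neg, Fin.val_succ, pow_succ]
    rw [← Finset.sum_neg_distrib]
    congr 1
    exact Finset.sum_congr rfl fun a _ => by ring

/-- Multilinear functionals, alternating in the first block, symmetric in the second. -/
structure IsC (k j : ℕ) (c : (Fin k → g) → (Fin j → g) → F) : Prop where
  addv : ∀ (v : Fin k → g) (t : Fin k) (x y : g) (w : Fin j → g),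
      c (Function.update v t (x + y)) w
        = c (Function.update v t x) w + c (Function.update v t y) w
  smulv : ∀ (v : Fin k → g) (t : Fin k) (s : F) (x : g) (w : Fin j → g),
      c (Function.update v t (s • x)) w = s * c (Function.update v t x) w
  alt : ∀ (v : Fin k → g) (t t' : Fin k) (w : Fin j → g), t ≠ t' → v t = v t' → c v w = 0
  addw : ∀ (v : Fin k → g) (w : Fin j → g) (r : Fin j) (x y : g),
      c v (Function.update w r (x + y))
        = c v (Function.update w r x) + c v (Function.update w r y)
  smulw : ∀ (v : Fin k → g) (w : Fin j → g) (r : Fin j) (s : F) (x : g),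
      c v (Function.update w r (s • x)) = s * c v (Function.update w r x)
  sym : ∀ (v : Fin k → g) (w : Fin j → g) (ρ : Equiv.Perm (Fin j)), c v (w ∘ ρ) = c v w

namespace IsC

variable {k j : ℕ} {c c' : (Fin k → g) → (Fin j → g) → F}

theorem add (H : IsC k j c) (H' : IsC k j c') : IsC k j (c + c') where
  addv v t x y w := by simp only [Pi.add_apply, H.addv, H'.addv]; ring
  smulv v t s x w := by simp only [Pi.add_apply, H.smulv, H'.smulv]; ring
  alt v t t' w h1 h2 := by simp only [Pi.add_apply, H.alt v t t' w h1 h2, H'.alt v t t' w h1 h2, add_zero]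
  addw v w r x y := by simp only [Pi.add_apply, H.addw, H'.addw]; ring
  smulw v w r s x := by simp only [Pi.add_apply, H.smulw, H'.smulw]; ring
  sym v w ρ := by simp only [Pi.add_apply, H.sym, H'.sym]

theorem smul (a : F) (H : IsC k j c) : IsC k j (a • c) where
  addv v t x y w := by simp only [Pi.smul_apply, smul_eq_mul, H.addv]; ring
  smulv v t s x w := by simp only [Pi.smul_apply, smul_eq_mul, H.smulv]; ring
  alt v t t' w h1 h2 := by simp only [Pi.smul_apply, smul_eq_mul, H.alt v t t' w h1 h2, mul_zero]
  addw v w r x y := by simp only [Pi.smul_apply, smul_eq_mul, H.addw]; ring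
  smulw v w r s x := by simp only [Pi.smul_apply, smul_eq_mul, H.smulw]; ring
  sym v w ρ := by simp only [Pi.smul_apply, smul_eq_mul, H.sym]

theorem zero : IsC k j (0 : (Fin k → g) → (Fin j → g) → F) := by
  constructor <;> simp

theorem neg (H : IsC k j c) : IsC k j (-c) := by
  have := H.smul (-1); rwa [neg_one_smul] at this

theorem sub (H : IsC k j c) (H' : IsC k j c') : IsC k j (c - c') := by
  rw [sub_eq_add_neg]; exact H.add H'.neg

/-- The alternating map of the first block. -/
def toAlt (H : IsC k j c) (w : Fin j → g) : g [⋀^Fin k]→ₗ[F] F where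
  toFun v := c v w
  map_update_add' v t x y := by
    rename_i inst
    have : inst = instDecidableEqFin k := Subsingleton.elim _ _
    subst this
    exact H.addv v t x y w
  map_update_smul' v t s x := by
    rename_i inst
    have : inst = instDecidableEqFin k := Subsingleton.elim _ _
    subst this
    exact H.smulv v t s x w
  map_eq_zero_of_eq' v t t' h1 h2 := H.alt v t t' w h2 h1

theorem front {k : ℕ} {c : (Fin (k+1) → g) → (Fin j → g) → F} (H : IsC (k+1) j c)
    (v : Fin (k+1) → g) (t : Fin (k+1)) (y : g) (w : Fin j → g) :
    c (Function.update v t y) w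
      = (-1)^(t.1) * c (Fin.cons y (v ∘ t.succAbove) : Fin (k+1) → g) w := by
  have := AlternatingMap.map_insertNth (H.toAlt w) t y (v ∘ t.succAbove)
  have e : t.insertNth y (v ∘ t.succAbove) = Function.update v t y :=
    Fin.insertNth_removeNth t y v
  rw [e] at this
  rcases neg_one_pow_eq_or ℤ t.1 with h | h
  · rw [h, one_smul] at this
    have h' : (-1:F)^(t.1) = 1 := by exact_mod_cast congrArg (Int.cast : ℤ → F) h
    rw [h', one_mul]; exact this
  · rw [h, neg_one_smul] at this
    have h' : (-1:F)^(t.1) = -1 := by exact_mod_cast congrArg (Int.cast : ℤ → F) h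
    rw [h', neg_one_mul]; exact this

theorem swap_front {k : ℕ} {c : (Fin (k+2) → g) → (Fin j → g) → F} (H : IsC (k+2) j c)
    (x y : g) (v : Fin k → g) (w : Fin j → g) :
    c (Fin.cons x (Fin.cons y v : Fin (k+1) → g) : Fin (k+2) → g) w
      = - c (Fin.cons y (Fin.cons x v : Fin (k+1) → g) : Fin (k+2) → g) w := by
  have := H.front (Fin.cons x (Fin.cons y v : Fin (k+1) → g) : Fin (k+2) → g)
    (Fin.succ 0) y w
  rw [cons_comp_succAbove_succ, cons_comp_succAbove_zero, ← Fin.cons_update,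
    Fin.update_cons_zero] at this
  simpa using this

theorem frontw {j : ℕ} {c : (Fin k → g) → (Fin (j+1) → g) → F} (H : IsC k (j+1) c)
    (v : Fin k → g) (w : Fin (j+1) → g) (r : Fin (j+1)) (y : g) :
    c v (Function.update w r y) = c v (Fin.cons y (w ∘ r.succAbove) : Fin (j+1) → g) := by
  rw [← H.sym v (Fin.cons y (w ∘ r.succAbove) : Fin (j+1) → g) r.cycleRange]
  congr 1
  funext t
  rcases eq_or_ne t r with rfl | h
  · simp
  · obtain ⟨s, rfl⟩ := Fin.exists_succAbove_eq h
    simp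

theorem swap_frontw {j : ℕ} {c : (Fin k → g) → (Fin (j+2) → g) → F} (H : IsC k (j+2) c)
    (v : Fin k → g) (x y : g) (w : Fin j → g) :
    c v (Fin.cons x (Fin.cons y w : Fin (j+1) → g) : Fin (j+2) → g)
      = c v (Fin.cons y (Fin.cons x w : Fin (j+1) → g) : Fin (j+2) → g) := by
  have := H.frontw v (Fin.cons x (Fin.cons y w : Fin (j+1) → g) : Fin (j+2) → g)
    (Fin.succ 0) y
  rw [cons_comp_succAbove_succ, cons_comp_succAbove_zero, ← Fin.cons_update,
    Fin.update_cons_zero] at this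
  exact this

end IsC

theorem IsC_succ_io {W : WFam F g} {k j : ℕ} (H : ∀ x, IsC k j (io x W k j))
    (Ha : ∀ x y, io (x + y) W k j = io x W k j + io y W k j)
    (Hs : ∀ (s : F) x, io (s • x) W k j = s • io x W k j)
    (Hz : ∀ k', k = k' + 1 → ∀ x, io x (io x W) k' j = 0) : IsC (k+1) j (W (k+1) j) := by
  have key : ∀ v w, W (k+1) j v w = io (v 0) W k j (Fin.tail v) w := by
    intro v w
    simp only [io, LinearMap.coe_mk, AddHom.coe_mk, Fin.cons_self_tail]
  have hzero : ∀ (x : g) (v : Fin k → g) (t : Fin k) (w : Fin j → g), v t = x →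
      io x W k j v w = 0 := by
    intro x v t w hx
    cases k with
    | zero => exact t.elim0
    | succ k =>
      have h1 := (H x).front v t (v t) w
      rw [Function.update_eq_self] at h1
      rw [h1, hx]
      have h2 := congrFun (congrFun (Hz k rfl x) (v ∘ t.succAbove)) w
      have h3 : io x W (k+1) j (Fin.cons x (v ∘ t.succAbove) : Fin (k+1) → g) w = 0 := h2
      rw [h3, mul_zero]
  refine ⟨?_, ?_, ?_, ?_, ?_, ?_⟩
  · intro v t x y w
    refine Fin.cases ?_ (fun t => ?_) t
    · simp only [key, Function.update_self, Fin.tail_update_zero, Ha, Pi.add_apply]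
    · simp only [key, Fin.tail_update_succ, (H _).addv]
      simp [Function.update_of_ne (Fin.succ_ne_zero t).symm]
  · intro v t s x w
    refine Fin.cases ?_ (fun t => ?_) t
    · simp only [key, Function.update_self, Fin.tail_update_zero, Hs, Pi.smul_apply, smul_eq_mul]
    · simp only [key, Fin.tail_update_succ, (H _).smulv]
      simp [Function.update_of_ne (Fin.succ_ne_zero t).symm]
  · intro v t t' w
    refine Fin.cases ?_ (fun t => ?_) t
    · refine Fin.cases ?_ (fun t' => ?_) t'
      · intro h; exact absurd rfl h
      · intro _ h2
        rw [key]
        exact hzero _ _ t' w h2.symm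
    · refine Fin.cases ?_ (fun t' => ?_) t'
      · intro _ h2
        rw [key]
        exact hzero _ _ t w h2
      · intro h1 h2
        rw [key]
        exact (H _).alt _ t t' w (fun h => h1 (by rw [h])) h2
  · intro v w r x y
    simp only [key, (H _).addw]
  · intro v w r s x
    simp only [key, (H _).smulw]
  · intro v w ρ
    simp only [key, (H _).sym]

theorem sym_of_cons {j : ℕ} (f : (Fin (j+1) → g) → F)
    (h1 : ∀ x (w : Fin j → g) (ρ : Equiv.Perm (Fin j)),
      f (Fin.cons x (w ∘ ρ) : Fin (j+1) → g) = f (Fin.cons x w : Fin (j+1) → g))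
    (h2 : ∀ j' (e : j = j' + 1) x y (w : Fin j' → g),
      f (Fin.cons x ((Fin.cons y w : Fin (j'+1) → g) ∘ Fin.cast e) : Fin (j+1) → g)
        = f (Fin.cons y ((Fin.cons x w : Fin (j'+1) → g) ∘ Fin.cast e) : Fin (j+1) → g))
    (w : Fin (j+1) → g) (ρ : Equiv.Perm (Fin (j+1))) : f (w ∘ ρ) = f w := by
  have hadj : ∀ (i : Fin j) (w : Fin (j+1) → g),
      f (w ∘ Equiv.swap i.castSucc i.succ) = f w := by
    intro i w
    cases j with
    | zero => exact i.elim0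
    | succ j =>
      refine Fin.cases ?_ (fun i => ?_) i
      · have := h2 j rfl (w 1) (w 0) (Fin.tail (Fin.tail w))
        convert this using 2
        · funext t
          refine Fin.cases ?_ (fun t => Fin.cases ?_ (fun t => ?_) t) t
          · simp
          · simp
          · simp only [Function.comp]
            rw [Equiv.swap_apply_of_ne_of_ne]
            · simp [Fin.tail]
            · simp [Fin.ext_iff]
            · simp [Fin.ext_iff]
        · funext t
          refine Fin.cases ?_ (fun t => Fin.cases ?_ (fun t => ?_) t) t
          · simp
          · simp
          · simp [Fin.tail]
      · have := h1 (w 0) (Fin.tail w) (Equiv.swap i.castSucc i.succ)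
        rw [Fin.cons_self_tail] at this
        rw [← this]
        congr 1
        funext t
        refine Fin.cases ?_ (fun t => ?_) t
        · simp only [Function.comp, Fin.cons_zero]
          rw [Equiv.swap_apply_of_ne_of_ne]
          · simp [Fin.ext_iff]
          · simp [Fin.ext_iff]
        · simp only [Function.comp, Fin.cons_succ, Fin.tail]
          congr 1
          have hinj : Function.Injective (Fin.succ : Fin (j+1) → Fin (j+2)) := Fin.succ_injective _
          rw [← hinj.swap_apply]
          rfl
  have hmem : ρ ∈ Submonoid.closure
      (Set.range fun i : Fin j ↦ Equiv.swap i.castSucc i.succ) := by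
    rw [Equiv.Perm.mclosure_swap_castSucc_succ]; trivial
  revert w
  induction hmem using Submonoid.closure_induction with
  | mem x hx =>
    obtain ⟨i, rfl⟩ := hx
    exact hadj i
  | one => intro w; rfl
  | mul x y _ _ hx hy =>
    intro w
    have : w ∘ (x * y : Equiv.Perm _) = (w ∘ x) ∘ y := rfl
    rw [this, hy, hx]

theorem IsC_succ_ka {W : WFam F g} {k j : ℕ} (H : ∀ x, IsC k j (ka x W k j))
    (Ha : ∀ x y, ka (x + y) W k j = ka x W k j + ka y W k j)
    (Hs : ∀ (s : F) x, ka (s • x) W k j = s • ka x W k j)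
    (Hz : ∀ j', j = j' + 1 → ∀ x y, ka x (ka y W) k j' = ka y (ka x W) k j') :
    IsC k (j+1) (W k (j+1)) := by
  have key : ∀ v w, W k (j+1) v w = ka (w 0) W k j v (Fin.tail w) := by
    intro v w
    simp only [ka, LinearMap.coe_mk, AddHom.coe_mk, Fin.cons_self_tail]
  refine ⟨?_, ?_, ?_, ?_, ?_, ?_⟩
  · intro v t x y w
    simp only [key, (H _).addv]
  · intro v t s x w
    simp only [key, (H _).smulv]
  · intro v t t' w h1 h2
    rw [key]; exact (H _).alt _ t t' _ h1 h2
  · intro v w t x y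
    refine Fin.cases ?_ (fun t => ?_) t
    · simp only [key, Function.update_self, Fin.tail_update_zero, Ha, Pi.add_apply]
    · simp only [key, Fin.tail_update_succ, (H _).addw]
      simp [Function.update_of_ne (Fin.succ_ne_zero t).symm]
  · intro v w t s x
    refine Fin.cases ?_ (fun t => ?_) t
    · simp only [key, Function.update_self, Fin.tail_update_zero, Hs, Pi.smul_apply, smul_eq_mul]
    · simp only [key, Fin.tail_update_succ, (H _).smulw]
      simp [Function.update_of_ne (Fin.succ_ne_zero t).symm]
  · intro v w ρ
    refine sym_of_cons (W k (j+1) v) (fun x w ρ => (H x).sym v w ρ) ?_ w ρ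
    rintro j' rfl x y w
    exact congrFun (congrFun (Hz j' rfl y x) v) w

/-- Families of (nonrelative) cochains. -/
def Good (W : WFam F g) : Prop := ∀ i j, IsC i j (W i j)

namespace Good

variable {W W' : WFam F g}

theorem add (H : Good W) (H' : Good W') : Good (W + W') := fun i j => (H i j).add (H' i j)
theorem sub (H : Good W) (H' : Good W') : Good (W - W') := fun i j => (H i j).sub (H' i j)
theorem smul (a : F) (H : Good W) : Good (a • W) := fun i j => (H i j).smul a
theorem neg (H : Good W) : Good (-W) := fun i j => (H i j).neg

theorem io (x : g) (H : Good W) : Good (io x W) := by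
  intro i j
  have := H (i+1) j
  refine ⟨?_, ?_, ?_, ?_, ?_, ?_⟩
  · intro v t a b w
    simp only [_root_.io, LinearMap.coe_mk, AddHom.coe_mk, Fin.cons_update, this.addv]
  · intro v t a b w
    simp only [_root_.io, LinearMap.coe_mk, AddHom.coe_mk, Fin.cons_update, this.smulv]
  · intro v t t' w h1 h2
    exact this.alt _ t.succ t'.succ w (fun h => h1 (Fin.succ_injective _ h)) (by simpa using h2)
  · intro v w r a b
    exact this.addw _ _ _ _ _
  · intro v w r a b
    exact this.smulw _ _ _ _ _
  · intro v w ρ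
    exact this.sym _ _ _

theorem ka (x : g) (H : Good W) : Good (ka x W) := by
  intro i j
  have := H i (j+1)
  refine ⟨?_, ?_, ?_, ?_, ?_, ?_⟩
  · intro v t a b w
    exact this.addv _ _ _ _ _
  · intro v t a b w
    exact this.smulv _ _ _ _ _
  · intro v t t' w h1 h2
    exact this.alt _ t t' _ h1 h2
  · intro v w r a b
    simp only [_root_.ka, LinearMap.coe_mk, AddHom.coe_mk, Fin.cons_update, this.addw]
  · intro v w r a b
    simp only [_root_.ka, LinearMap.coe_mk, AddHom.coe_mk, Fin.cons_update, this.smulw]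
  · intro v w ρ
    have h := this.frontw v (Fin.cons x (w ∘ ρ) : Fin (j+1) → g) 0 x
    have h' := this.sym v (Fin.cons x w : Fin (j+1) → g) (Equiv.Perm.decomposeFin.symm (0, ρ))
    simp only [_root_.ka, LinearMap.coe_mk, AddHom.coe_mk]
    rw [← h']
    congr 1
    funext t
    refine Fin.cases ?_ (fun t => ?_) t <;> simp

theorem io_add (H : Good W) (x y : g) : _root_.io (x + y) W = _root_.io x W + _root_.io y W := by
  funext i j v w
  have := (H (i+1) j).addv (Fin.cons 0 v : Fin (i+1) → g) 0 x y w
  simp only [Fin.update_cons_zero] at this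
  exact this

theorem io_smul (H : Good W) (s : F) (x : g) : _root_.io (s • x) W = s • _root_.io x W := by
  funext i j v w
  have := (H (i+1) j).smulv (Fin.cons 0 v : Fin (i+1) → g) 0 s x w
  simp only [Fin.update_cons_zero] at this
  exact this

theorem ka_add (H : Good W) (x y : g) : _root_.ka (x + y) W = _root_.ka x W + _root_.ka y W := by
  funext i j v w
  have := (H i (j+1)).addw v (Fin.cons 0 w : Fin (j+1) → g) 0 x y
  simp only [Fin.update_cons_zero] at this
  exact this

theorem ka_smul (H : Good W) (s : F) (x : g) : _root_.ka (s • x) W = s • _root_.ka x W := by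
  funext i j v w
  have := (H i (j+1)).smulw v (Fin.cons 0 w : Fin (j+1) → g) 0 s x
  simp only [Fin.update_cons_zero] at this
  exact this

theorem io_zero (H : Good W) : _root_.io 0 W = 0 := by
  have := H.io_smul 0 0; simpa using this

theorem ka_zero (H : Good W) : _root_.ka 0 W = 0 := by
  have := H.ka_smul 0 0; simpa using this

theorem io_neg (H : Good W) (x : g) : _root_.io (-x) W = - _root_.io x W := by
  have := H.io_smul (-1) x; simpa using this

theorem ka_neg (H : Good W) (x : g) : _root_.ka (-x) W = - _root_.ka x W := by
  have := H.ka_smul (-1) x; simpa using this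

theorem io_sub (H : Good W) (x y : g) : _root_.io (x - y) W = _root_.io x W - _root_.io y W := by
  rw [sub_eq_add_neg, H.io_add, H.io_neg, sub_eq_add_neg]

theorem ka_sub (H : Good W) (x y : g) : _root_.ka (x - y) W = _root_.ka x W - _root_.ka y W := by
  rw [sub_eq_add_neg, H.ka_add, H.ka_neg, sub_eq_add_neg]

theorem io_io (H : Good W) (x y : g) :
    _root_.io x (_root_.io y W) = - _root_.io y (_root_.io x W) := by
  funext i j v w
  exact (H (i+2) j).swap_front y x v w

theorem io_io_self (H : Good W) (x : g) : _root_.io x (_root_.io x W) = 0 := by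
  funext i j v w
  exact (H (i+2) j).alt _ 0 1 w (by simp) rfl

theorem ka_ka (H : Good W) (x y : g) :
    _root_.ka x (_root_.ka y W) = _root_.ka y (_root_.ka x W) := by
  funext i j v w
  exact (H i (j+2)).swap_frontw v y x w

end Good

theorem Good_of_level {T : WFam F g}
    (H : ∀ k j, IsC k j (T k j)) : Good T := H

theorem io_dK {W : WFam F g} (H : Good W) (x : g) : io x (dK W) = - dK (io x W) := by
  funext i j v w
  cases j with
  | zero => simp [io]
  | succ j =>
    simp only [io, dK, dKoszul, LinearMap.coe_mk, AddHom.coe_mk, Pi.neg_apply]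
    rw [← Finset.sum_neg_distrib]
    exact Finset.sum_congr rfl fun r _ => (H (i+2) j).swap_front _ _ _ _

theorem ka_sH {W : WFam F g} (H : Good W) (p : g → g) (x : g) :
    ka x (sH p W) = sH p (ka x W) := by
  funext i j v w
  cases i with
  | zero => simp [ka]
  | succ i =>
    simp only [ka, sH, LinearMap.coe_mk, AddHom.coe_mk]
    exact Finset.sum_congr rfl fun r _ => by rw [(H i (j+2)).swap_frontw]

/-- The Lie derivative. -/
def lieD (x : g) : WFam F g →ₗ[F] WFam F g := - der (fun y => ⁅x, y⁆)

theorem pairTupleW_zero {k : ℕ} (x : g) (v : Fin (k+1) → g) (br : g) (l : Fin (k+1)) :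
    pairTupleW (k+1) (Fin.cons x v : Fin (k+2) → g) br 0 l.succ
      = (Fin.cons br (v ∘ l.succAbove) : Fin (k+1) → g) := by
  funext t
  refine Fin.cases ?_ (fun t => ?_) t
  · simp [pairTupleW]
  · simp only [pairTupleW, Fin.val_succ, Fin.val_zero, Fin.cons_succ, Function.comp,
      Fin.succAbove, Fin.lt_def, Fin.val_castSucc]
    have e1 : ¬ (t.1 + 1 = 0) := by omega
    have e2 : ¬ (t.1 + 1 - 1 < 0) := by omega
    rw [dif_neg e1, dif_neg e2]
    by_cases h : t.1 < l.1
    · rw [dif_pos (by omega), if_pos h]; rfl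
    · rw [dif_neg (by omega), if_neg h]; rfl

theorem pairTupleW_front {k : ℕ} (v : Fin (k+2) → g) (br : g) (a l : Fin (k+2)) :
    pairTupleW (k+1) v br a l
      = (Fin.cons br (Fin.tail (pairTupleW (k+1) v br a l)) : Fin (k+1) → g) := by
  funext t
  refine Fin.cases ?_ (fun t => ?_) t
  · simp [pairTupleW]
  · simp [Fin.tail]

theorem pairTupleW_succ {k : ℕ} (x : g) (v : Fin (k+2) → g) (br : g) (a l : Fin (k+2)) :
    pairTupleW (k+2) (Fin.cons x v : Fin (k+3) → g) br a.succ l.succ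
      = (Fin.cons br (Fin.cons x (Fin.tail (pairTupleW (k+1) v br a l)) : Fin (k+1) → g)
          : Fin (k+2) → g) := by
  funext t
  refine Fin.cases ?_ (fun t => Fin.cases ?_ (fun t => ?_) t) t
  · simp [pairTupleW]
  · simp [pairTupleW]
  · simp only [pairTupleW, Fin.val_succ, Fin.cons_succ, Fin.tail]
    have e1 : ¬ (t.1 + 1 + 1 = 0) := by omega
    have e2 : ¬ (t.1 + 1 = 0) := by omega
    rw [dif_neg e1, dif_neg e2]
    split_ifs <;> first | rfl | (exfalso; omega)

theorem io_dL {W : WFam F g} (H : Good W) (x : g) :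
    io x (dL W) = lieD x W - dL (io x W) := by
  funext i j v w
  cases i with
  | zero =>
    simp only [io, dL, dLieS, lieD, der, LinearMap.coe_mk, AddHom.coe_mk, Pi.sub_apply,
      Fin.sum_univ_succ, Fin.cons_zero, cons_comp_succAbove_zero, LinearMap.neg_apply,
      Pi.neg_apply]
    simp
  | succ i =>
    have hL : io x (dL W) (i+1) j v w
        = dLieS F g (i+1) j (W (i+1) j) (Fin.cons x v : Fin (i+2) → g) w := rfl
    have hR : dL (io x W) (i+1) j v w
        = dLieS F g i j (fun v w => W (i+1) j (Fin.cons x v : Fin (i+1) → g) w) v w := rfl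
    have hD : lieD x W (i+1) j v w = -((∑ t : Fin (i+1),
        W (i+1) j (Function.update v t ⁅x, v t⁆) w)
      + (∑ r : Fin j, W (i+1) j v (Function.update w r ⁅x, w r⁆))) := rfl
    rw [Pi.sub_apply, Pi.sub_apply, Pi.sub_apply, Pi.sub_apply, hL, hR, hD]
    unfold dLieS
    rw [Fin.sum_univ_succ, Fin.sum_univ_succ (n := i+1)
      (f := fun a => ∑ l : Fin (i+1+1), if a < l then _ else _)]
    have e1 : (∑ l : Fin (i+1+1), if (0 : Fin (i+1+1)) < l then
        (-1:F) ^ ((0 : Fin (i+1+1)).1 + l.1) * W (i+1) j (pairTupleW (i+1) (Fin.cons x v)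
          ⁅(Fin.cons x v : Fin (i+2) → g) 0, (Fin.cons x v : Fin (i+2) → g) l⁆ 0 l) w else 0)
        = - ∑ t : Fin (i+1), W (i+1) j (Function.update v t ⁅x, v t⁆) w := by
      rw [Fin.sum_univ_succ, if_neg (lt_irrefl _), zero_add, ← Finset.sum_neg_distrib]
      refine Finset.sum_congr rfl fun t _ => ?_
      rw [if_pos (Fin.succ_pos t), pairTupleW_zero, (H (i+1) j).front]
      simp only [Fin.cons_zero, Fin.cons_succ, Fin.val_zero, Fin.val_succ, pow_succ, zero_add]
      ring
    have e2 : (∑ a : Fin (i+1), ∑ l : Fin (i+1+1), if a.succ < l then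
        (-1:F) ^ (a.succ.1 + l.1) * W (i+1) j (pairTupleW (i+1) (Fin.cons x v)
          ⁅(Fin.cons x v : Fin (i+2) → g) a.succ, (Fin.cons x v : Fin (i+2) → g) l⁆ a.succ l) w
            else 0)
        = - ∑ a : Fin (i+1), ∑ l : Fin (i+1), (if a < l then (-1:F) ^ (a.1 + l.1) *
          W (i+1) j (Fin.cons x (pairTupleW i v ⁅v a, v l⁆ a l) : Fin (i+1) → g) w else 0) := by
      rw [← Finset.sum_neg_distrib]
      refine Finset.sum_congr rfl fun a _ => ?_
      rw [Fin.sum_univ_succ, if_neg (by simp), zero_add, ← Finset.sum_neg_distrib]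
      refine Finset.sum_congr rfl fun l _ => ?_
      by_cases hal : a < l
      · rw [if_pos (by simpa using hal), if_pos hal]
        cases i with
        | zero => omega
        | succ i =>
          simp only [Fin.cons_succ, Fin.val_succ]
          rw [pairTupleW_succ, (H (i+2) j).swap_front, ← pairTupleW_front]
          ring
      · rw [if_neg (by simpa using hal), if_neg hal, neg_zero]
    rw [e1, e2]
    simp only [Fin.cons_zero, Fin.cons_succ, cons_comp_succAbove_zero, cons_comp_succAbove_succ,
      Fin.val_zero, Fin.val_succ]
    have e3 : (∑ a : Fin (i+1), (-1:F)^(a.1+1+1) * ∑ r : Fin j,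
        W (i+1) j (Fin.cons x (v ∘ a.succAbove) : Fin (i+1) → g)
          (Function.update w r ⁅v a, w r⁆))
        = - ∑ a : Fin (i+1), (-1:F)^(a.1+1) * ∑ r : Fin j,
        W (i+1) j (Fin.cons x (v ∘ a.succAbove) : Fin (i+1) → g)
          (Function.update w r ⁅v a, w r⁆) := by
      rw [← Finset.sum_neg_distrib]
      exact Finset.sum_congr rfl fun a _ => by ring
    rw [e3]
    ring

theorem io_lieD (x y : g) (W : WFam F g) :
    io y (lieD x W) = lieD x (io y W) - io ⁅x, y⁆ W := by
  simp only [lieD, LinearMap.neg_apply, map_neg, io_der]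
  abel

theorem ka_lieD (x y : g) (W : WFam F g) :
    ka y (lieD x W) = lieD x (ka y W) - ka ⁅x, y⁆ W := by
  simp only [lieD, LinearMap.neg_apply, map_neg, ka_der]
  abel

theorem Good.der {W : WFam F g} (H : Good W) (φ : g →ₗ[F] g) : Good (der φ W) := by
  intro k
  induction k generalizing W with
  | zero =>
    intro j
    induction j generalizing W with
    | zero => rw [der_zero_zero]; exact IsC.zero
    | succ j ih =>
      refine IsC_succ_ka (fun x => ?_) (fun x y => ?_) (fun s x => ?_) ?_
      · rw [ka_der]; exact (ih (H.ka x)).add (H.ka _ _ _)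
      · simp only [ka_der, map_add, H.ka_add, Pi.add_apply]; abel
      · simp only [ka_der, map_smul, H.ka_smul, Pi.smul_apply, Pi.add_apply, smul_add]
      · rintro j' rfl x y
        simp only [ka_der, map_add, Pi.add_apply]
        rw [H.ka_ka x y, H.ka_ka x (φ y), H.ka_ka (φ x) y]; abel
  | succ k ih =>
    intro j
    refine IsC_succ_io (fun x => ?_) (fun x y => ?_) (fun s x => ?_) ?_
    · rw [io_der]; exact (ih (H.io x) j).add (H.io _ _ _)
    · simp only [io_der, map_add, H.io_add, Pi.add_apply]; abel
    · simp only [io_der, map_smul, H.io_smul, Pi.smul_apply, Pi.add_apply, smul_add]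
    · rintro j' rfl x
      simp only [io_der, map_add, Pi.add_apply]
      rw [H.io_io_self x, H.io_io x (φ x)]; simp

theorem Good.lieD {W : WFam F g} (H : Good W) (x : g) : Good (lieD x W) :=
  (H.der (LieAlgebra.ad F g x)).neg

theorem Good.dL {W : WFam F g} (H : Good W) : Good (dL W) := by
  intro k
  induction k generalizing W with
  | zero => intro j; rw [dL_zero]; exact IsC.zero
  | succ k ih =>
    intro j
    refine IsC_succ_io (fun x => ?_) (fun x y => ?_) (fun s x => ?_) ?_
    · rw [io_dL H]; exact (H.lieD x k j).sub (ih (H.io x) j)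
    · have e : _root_.lieD (x + y) W = _root_.lieD x W + _root_.lieD y W := by
        funext a b v w
        simp only [_root_.lieD, _root_.der, LinearMap.neg_apply, LinearMap.coe_mk, AddHom.coe_mk,
          Pi.neg_apply, Pi.add_apply, add_lie, (H a b).addv, (H a b).addw, Finset.sum_add_distrib]
        ring
      simp only [io_dL H, H.io_add, e, map_add, Pi.add_apply, Pi.sub_apply]; abel
    · have e : _root_.lieD (s • x) W = s • _root_.lieD x W := by
        funext a b v w
        simp only [_root_.lieD, _root_.der, LinearMap.neg_apply, LinearMap.coe_mk, AddHom.coe_mk,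
          Pi.neg_apply, Pi.smul_apply, smul_lie, (H a b).smulv, (H a b).smulw, smul_eq_mul,
          ← Finset.mul_sum]
        ring
      simp only [io_dL H, H.io_smul, e, map_smul, Pi.smul_apply, Pi.sub_apply, smul_sub]
    · rintro j' rfl x
      simp only [io_dL H, map_sub, io_dL (H.io x), io_lieD, H.io_io_self, lie_self, H.io_zero,
        map_zero]
      simp

theorem Good.dK {W : WFam F g} (H : Good W) : Good (dK W) := by
  intro k j
  induction j generalizing W with
  | zero => rw [dK_zero]; exact IsC.zero
  | succ j ih =>
    refine IsC_succ_ka (fun x => ?_) (fun x y => ?_) (fun s x => ?_) ?_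
    · rw [ka_dK]; exact (ih (H.ka x)).add (H.io _ _ _)
    · simp only [ka_dK, H.ka_add, H.io_add, map_add, Pi.add_apply]; abel
    · simp only [ka_dK, H.ka_smul, H.io_smul, map_smul, Pi.add_apply, Pi.smul_apply, smul_add]
    · rintro j' rfl x y
      simp only [ka_dK, map_add, Pi.add_apply, H.ka_ka x y, ← io_ka]; abel

theorem Good.sH {W : WFam F g} (H : Good W) (p : g →ₗ[F] g) : Good (sH p W) := by
  intro k
  induction k generalizing W with
  | zero => intro j; rw [sH_zero]; exact IsC.zero
  | succ k ih =>
    intro j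
    refine IsC_succ_io (fun x => ?_) (fun x y => ?_) (fun s x => ?_) ?_
    · rw [io_sH]; exact (H.ka _ k j).sub (ih (H.io x) j)
    · simp only [io_sH, H.ka_add, H.io_add, map_add, Pi.add_apply, Pi.sub_apply]; abel
    · simp only [io_sH, H.ka_smul, H.io_smul, map_smul, Pi.sub_apply, Pi.smul_apply, smul_sub]
    · rintro j' rfl x
      simp only [io_sH, map_sub, H.io_io_self, ← io_ka, map_zero]
      simp

theorem der_comm {W : WFam F g} (H : Good W) (φ ψ χ : g →ₗ[F] g)
    (hχ : ∀ x, ψ (φ x) - φ (ψ x) = χ x) :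
    der ψ (der φ W) - der φ (der ψ W) = - der χ W := by
  funext k
  induction k generalizing W with
  | zero =>
    funext j
    induction j generalizing W with
    | zero => simp [der_zero_zero]
    | succ j ih =>
      refine ka_ext fun x => ?_
      have h := ih (H.ka x)
      simp only [map_sub, map_neg, ka_der, map_add, ← hχ, H.ka_sub, Pi.add_apply, Pi.sub_apply,
        Pi.neg_apply] at h ⊢
      rw [sub_eq_iff_eq_add] at h
      rw [h]
      abel
  | succ k ih =>
    funext j
    refine io_ext fun x => ?_
    have h := congrFun (ih (H.io x)) j
    simp only [map_sub, map_neg, io_der, map_add, ← hχ, H.io_sub, Pi.add_apply, Pi.sub_apply,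
      Pi.neg_apply] at h ⊢
    rw [sub_eq_iff_eq_add] at h
    rw [h]
    abel

theorem lieD_lieD {W : WFam F g} (H : Good W) (x y : g) :
    lieD x (lieD y W) = lieD y (lieD x W) + lieD ⁅x, y⁆ W := by
  have := der_comm H (LieAlgebra.ad F g y) (LieAlgebra.ad F g x) (LieAlgebra.ad F g ⁅x, y⁆)
    (fun z => by simp [LieAlgebra.ad_apply])
  have e : ∀ (z : g) (W : WFam F g), lieD z W = - der (LieAlgebra.ad F g z) W := fun _ _ => rfl
  simp only [e, map_neg, neg_neg]
  rw [sub_eq_iff_eq_add] at this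
  rw [this]; abel

theorem der_eq_zero {W : WFam F g} (φ : g → g) {i j : ℕ} (h : W i j = 0) : der φ W i j = 0 := by
  funext v w
  simp [der, h]

theorem lieD_eq_zero {W : WFam F g} (x : g) {i j : ℕ} (h : W i j = 0) : lieD x W i j = 0 := by
  have : lieD x W i j = - der (fun y => ⁅x, y⁆) W i j := rfl
  rw [this, der_eq_zero _ h, neg_zero]

theorem lieD_dL {W : WFam F g} (H : Good W) (x : g) : lieD x (dL W) = dL (lieD x W) := by
  funext k
  induction k generalizing W with
  | zero => funext j; rw [dL_zero, lieD_eq_zero _ (dL_zero W j)]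
  | succ k ih =>
    funext j
    refine io_ext fun y => ?_
    have h := congrFun (ih (H.io y)) j
    simp only [io_lieD, io_dL H, io_dL (H.lieD x), map_sub, lieD_lieD H x y, Pi.sub_apply,
      Pi.add_apply, h]
    abel

theorem dL_dL {W : WFam F g} (H : Good W) : dL (dL W) = 0 := by
  funext k
  induction k generalizing W with
  | zero => funext j; rw [dL_zero]; rfl
  | succ k ih =>
    funext j
    refine io_ext (W' := 0) fun y => ?_
    have h := congrFun (ih (H.io y)) j
    simp only [io_dL H, io_dL H.dL, map_sub, lieD_dL H, Pi.sub_apply, h]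
    simp

theorem der_dK (W : WFam F g) (φ : g → g) : der φ (dK W) = dK (der φ W) := by
  funext k j
  induction j generalizing W with
  | zero => rw [dK_zero, der_eq_zero _ (dK_zero W k)]
  | succ j ih =>
    refine ka_ext fun y => ?_
    have h := ih (ka y W)
    simp only [ka_der, ka_dK, io_der, map_add, Pi.add_apply, h]
    abel

theorem lieD_dK (W : WFam F g) (x : g) : lieD x (dK W) = dK (lieD x W) := by
  simp only [lieD, LinearMap.neg_apply, der_dK, map_neg]

theorem der_sH (W : WFam F g) (φ p : g → g) (hp : ∀ x, p (φ x) = φ (p x)) :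
    der φ (sH p W) = sH p (der φ W) := by
  funext k
  induction k generalizing W with
  | zero => funext j; rw [sH_zero, der_eq_zero _ (sH_zero p W j)]
  | succ k ih =>
    funext j
    refine io_ext fun y => ?_
    have h := congrFun (ih (io y W)) j
    simp only [io_der, io_sH, ka_der, map_add, map_sub, Pi.add_apply, Pi.sub_apply, h, hp]
    abel

theorem dK_dK {W : WFam F g} (H : Good W) : dK (dK W) = 0 := by
  funext k j
  induction j generalizing W with
  | zero => rw [dK_zero]; rfl
  | succ j ih =>
    refine ka_ext (W' := 0) fun y => ?_
    have h := ih (H.ka y)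
    simp only [ka_dK, io_dK H, map_add, Pi.add_apply, h]
    simp

theorem E_eq_zero {W : WFam F g} (H : Good W) (j : ℕ) (w : Fin (j+1) → g) (v : Fin 0 → g) :
    ∑ r : Fin (j+1), lieD (w r) W 0 j v (w ∘ r.succAbove) = 0 := by
  induction j generalizing W with
  | zero =>
    refine Finset.sum_eq_zero fun r _ => ?_
    have : lieD (w r) W 0 0 = - der (fun y => ⁅w r, y⁆) W 0 0 := rfl
    rw [this, der_zero_zero]; simp
  | succ j ih =>
    obtain ⟨x, u, rfl⟩ : ∃ x u, w = (Fin.cons x u : Fin (j+2) → g) :=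
      ⟨w 0, Fin.tail w, (Fin.cons_self_tail w).symm⟩
    rw [Fin.sum_univ_succ]
    simp only [Fin.cons_zero, Fin.cons_succ, cons_comp_succAbove_zero, cons_comp_succAbove_succ]
    have e1 : ∀ r : Fin (j+1), lieD (u r) W 0 (j+1) v
          (Fin.cons x (u ∘ r.succAbove) : Fin (j+1) → g)
        = lieD (u r) (ka x W) 0 j v (u ∘ r.succAbove)
          + W 0 (j+1) v (Function.update u r ⁅x, u r⁆) := by
      intro r
      have a1 : lieD (u r) W 0 (j+1) v (Fin.cons x (u ∘ r.succAbove) : Fin (j+1) → g)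
        = ka x (lieD (u r) W) 0 j v (u ∘ r.succAbove) := rfl
      rw [a1, ka_lieD, ← lie_skew, H.ka_neg, sub_neg_eq_add, (H 0 (j+1)).frontw]
      rfl
    simp only [e1, Finset.sum_add_distrib, ih (H.ka x)]
    simp [lieD, der]

theorem dL_dK {W : WFam F g} (H : Good W) : dL (dK W) + dK (dL W) = 0 := by
  funext k
  induction k generalizing W with
  | zero =>
    funext j
    cases j with
    | zero => simp
    | succ j =>
      funext v w
      have : ∀ x, dL W 1 j (Fin.cons x v : Fin 1 → g) = lieD x W 0 j v := by
        intro x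
        have := congrFun (congrFun (congrFun (io_dL H x) 0) j) v
        simp only [Pi.sub_apply, dL_zero] at this
        rw [← sub_zero (lieD x W 0 j v)]
        exact this
      have h2 : dK (dL W) 0 (j+1) v w
        = ∑ r : Fin (j+1), dL W 1 j (Fin.cons (w r) v : Fin 1 → g) (w ∘ r.succAbove) := rfl
      simp only [Pi.add_apply, dL_zero, h2, this, E_eq_zero H j w v]
      simp
  | succ k ih =>
    funext j
    refine io_ext (W' := 0) fun y => ?_
    have h := congrFun (ih (H.io y)) j
    simp only [Pi.add_apply, Pi.zero_apply] at h
    simp only [io_dL H.dK, io_dK H.dL, io_dL H, io_dK H, lieD_dK, map_add, map_sub, map_neg,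
      map_zero, Pi.add_apply, Pi.sub_apply, Pi.neg_apply, Pi.zero_apply]
    rw [add_eq_zero_iff_eq_neg.mp h]
    abel

/-- The Weil differential as a linear map. -/
def dW : WFam F g →ₗ[F] WFam F g := dL + dK

theorem dW_apply (W : WFam F g) : dW W = dL W + dK W := rfl

theorem dW_dW {W : WFam F g} (H : Good W) : dW (dW W) = 0 := by
  have h := dL_dK H
  simp only [dW_apply, map_add, dL_dL H, dK_dK H, zero_add, add_zero]
  rw [add_comm]; exact h

open Polynomial in
/-- The polynomial `∏_{b < n} (X - (a + b))`. -/
def qPoly (a : F) (n : ℕ) : F[X] := ∏ b ∈ Finset.range n, (X - C (a + (b : F)))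

theorem qPoly_zero (a : F) : qPoly a 0 = 1 := by simp [qPoly]

open Polynomial in
theorem qPoly_succ (a : F) (n : ℕ) : qPoly a (n+1) = (X - C (a + (n : F))) * qPoly a n := by
  rw [qPoly, Finset.prod_range_succ, mul_comm]; rfl

open Polynomial in
theorem qPoly_succ' (a : F) (n : ℕ) : qPoly a (n+1) = (X - C a) * qPoly (a + 1) n := by
  rw [qPoly, Finset.prod_range_succ', mul_comm]
  simp only [Nat.cast_zero, add_zero]
  congr 1
  refine Finset.prod_congr rfl fun b _ => ?_
  push_cast
  rw [add_assoc, add_comm (1 : F)]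

theorem qPoly_coeff [CharZero F] (a n : ℕ) (ha : a ≠ 0) : (qPoly (a : F) n).coeff 0 ≠ 0 := by
  rw [Polynomial.coeff_zero_eq_eval_zero, qPoly, Polynomial.eval_prod, Finset.prod_ne_zero_iff]
  intro b _
  simp only [Polynomial.eval_sub, Polynomial.eval_X, Polynomial.eval_C, zero_sub, ne_eq,
    neg_eq_zero]
  have : ((a + b : ℕ) : F) ≠ 0 := by
    rw [Nat.cast_ne_zero]; omega
  simpa using this

/-- Polynomials in an operator. -/
def pOp (N : WFam F g →ₗ[F] WFam F g) (f : Polynomial F) : WFam F g →ₗ[F] WFam F g :=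
  Polynomial.aeval (R := F) (A := Module.End F (WFam F g)) N f

theorem pOp_mul (N : WFam F g →ₗ[F] WFam F g) (f f' : Polynomial F) (W : WFam F g) :
    pOp N (f * f') W = pOp N f (pOp N f' W) := by
  rw [pOp, map_mul]; rfl

theorem pOp_one (N : WFam F g →ₗ[F] WFam F g) (W : WFam F g) : pOp N 1 W = W := by
  rw [pOp, map_one]; rfl

theorem pOp_add (N : WFam F g →ₗ[F] WFam F g) (f f' : Polynomial F) (W : WFam F g) :
    pOp N (f + f') W = pOp N f W + pOp N f' W := by
  rw [pOp, map_add]; rfl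

theorem pOp_X (N : WFam F g →ₗ[F] WFam F g) (W : WFam F g) : pOp N Polynomial.X W = N W := by
  rw [pOp, Polynomial.aeval_X]

theorem pOp_C (N : WFam F g →ₗ[F] WFam F g) (a : F) (W : WFam F g) :
    pOp N (Polynomial.C a) W = a • W := by
  rw [pOp, Polynomial.aeval_C]; rfl

theorem pOp_lin (N : WFam F g →ₗ[F] WFam F g) (a : F) (W : WFam F g) :
    pOp N (Polynomial.X - Polynomial.C a) W = N W - a • W := by
  rw [sub_eq_add_neg, ← Polynomial.C_neg, pOp_add, pOp_X, pOp_C, neg_smul, sub_eq_add_neg]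

theorem pOp_mem (N : WFam F g →ₗ[F] WFam F g) (S : Submodule F (WFam F g))
    (hS : ∀ c ∈ S, N c ∈ S) (f : Polynomial F) {c : WFam F g} (hc : c ∈ S) : pOp N f c ∈ S := by
  induction f using Polynomial.induction_on' generalizing c with
  | add f f' h h' => rw [pOp_add]; exact S.add_mem (h hc) (h' hc)
  | monomial n a =>
    induction n generalizing c with
    | zero => rw [Polynomial.monomial_zero_left, pOp_C]; exact S.smul_mem a hc
    | succ n ih =>
      rw [← Polynomial.monomial_mul_X, pOp_mul, pOp_X]
      exact ih (hS c hc)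

theorem pOp_comm (N T : WFam F g →ₗ[F] WFam F g) (hS : ∀ c, N (T c) = T (N c))
    (f : Polynomial F) (c : WFam F g) : pOp N f (T c) = T (pOp N f c) := by
  induction f using Polynomial.induction_on' generalizing c with
  | add f f' h h' => rw [pOp_add, pOp_add, h, h', map_add]
  | monomial n a =>
    induction n generalizing c with
    | zero => rw [Polynomial.monomial_zero_left, pOp_C, pOp_C, map_smul]
    | succ n ih =>
      rw [← Polynomial.monomial_mul_X, pOp_mul, pOp_X, pOp_mul, pOp_X, hS, ih]

theorem pOp_shift (N T : WFam F g →ₗ[F] WFam F g) (S : Submodule F (WFam F g))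
    (hS : ∀ c ∈ S, N c ∈ S) (δ : F) (hT : ∀ c ∈ S, T (N c) = N (T c) + δ • T c)
    (a : F) (n : ℕ) {c : WFam F g} (hc : c ∈ S) :
    T (pOp N (qPoly a n) c) = pOp N (qPoly (a - δ) n) (T c) := by
  induction n with
  | zero => simp only [qPoly_zero, pOp_one]
  | succ n ih =>
    rw [qPoly_succ, qPoly_succ, pOp_mul, pOp_mul, pOp_lin, pOp_lin, map_sub, map_smul,
      hT _ (pOp_mem N S hS _ hc), ih]
    module

theorem pOp_der_zero (φ : g → g) (f : Polynomial F) {c : WFam F g} {i j : ℕ} (h : c i j = 0) :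
    pOp (der φ) f c i j = 0 :=
  pOp_mem (der φ)
    { carrier := {W : WFam F g | W i j = 0}
      add_mem' := fun {a b} ha hb => by
        simp only [Set.mem_ofPred_eq, Pi.add_apply] at *
        rw [ha, hb, add_zero]
      zero_mem' := rfl
      smul_mem' := fun s a ha => by
        simp only [Set.mem_ofPred_eq, Pi.smul_apply] at *
        rw [ha, smul_zero] }
    (fun _ hc => der_eq_zero φ hc) f h

section Rel

variable (h : LieSubalgebra F g)

/-- Horizontal families. -/
def horS : Submodule F (WFam F g) where
  carrier := {W | Good W ∧ ∀ X ∈ h, io X W = 0}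
  add_mem' := fun {a b} ha hb => ⟨ha.1.add hb.1, fun X hX => by
    rw [map_add, ha.2 X hX, hb.2 X hX, add_zero]⟩
  zero_mem' := ⟨fun _ _ => IsC.zero, fun X _ => map_zero _⟩
  smul_mem' := fun s a ha => ⟨ha.1.smul s, fun X hX => by rw [map_smul, ha.2 X hX, smul_zero]⟩

/-- Basic (relative) families. -/
def relS : Submodule F (WFam F g) where
  carrier := {W | W ∈ horS h ∧ ∀ X ∈ h, lieD X W = 0}
  add_mem' := fun {a b} ha hb => ⟨(horS h).add_mem ha.1 hb.1, fun X hX => by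
    rw [map_add, ha.2 X hX, hb.2 X hX, add_zero]⟩
  zero_mem' := ⟨(horS h).zero_mem, fun X _ => map_zero _⟩
  smul_mem' := fun s a ha => ⟨(horS h).smul_mem s ha.1, fun X hX => by
    rw [map_smul, ha.2 X hX, smul_zero]⟩

variable {h}

theorem mem_relS {W : WFam F g} : W ∈ relS h ↔ ∀ i j, IsWCochain F g h i j (W i j) := by
  constructor
  · rintro ⟨⟨hg, hi⟩, hl⟩ i j
    have H := hg i j
    refine ⟨H.addv, H.smulv, H.alt, H.addw, H.smulw, H.sym, ?_, ?_⟩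
    · intro v t w ht
      cases i with
      | zero => exact t.elim0
      | succ i =>
        have h1 := H.front v t (v t) w
        rw [Function.update_eq_self] at h1
        have h2 := congrFun (congrFun (congrFun (congrFun (hi _ ht) i) j) (v ∘ t.succAbove)) w
        rw [h1, show W (i+1) j (Fin.cons (v t) (v ∘ t.succAbove) : Fin (i+1) → g) w = 0 from h2,
          mul_zero]
    · intro X hX v w
      have h2 := congrFun (congrFun (congrFun (congrFun (hl _ hX) i) j) v) w
      have h3 : lieD X W i j v w = - ((∑ t : Fin i, W i j (Function.update v t ⁅X, v t⁆) w)
        + (∑ r : Fin j, W i j v (Function.update w r ⁅X, w r⁆))) := rfl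
      rw [h3] at h2
      exact neg_eq_zero.mp h2
  · intro H
    refine ⟨⟨fun i j => ?_, fun X hX => ?_⟩, fun X hX => ?_⟩
    · obtain ⟨h1, h2, h3, h4, h5, h6, -, -⟩ := H i j
      exact ⟨h1, h2, h3, h4, h5, h6⟩
    · funext i j v w
      obtain ⟨-, -, -, -, -, -, h7, -⟩ := H (i+1) j
      exact h7 (Fin.cons X v : Fin (i+1) → g) 0 w hX
    · funext i j v w
      obtain ⟨-, -, -, -, -, -, -, h8⟩ := H i j
      have h3 : lieD X W i j v w = - ((∑ t : Fin i, W i j (Function.update v t ⁅X, v t⁆) w)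
        + (∑ r : Fin j, W i j v (Function.update w r ⁅X, w r⁆))) := rfl
      rw [h3, h8 X hX v w, neg_zero]; rfl

theorem relS_dL {W : WFam F g} (H : W ∈ relS h) : dL W ∈ relS h := by
  obtain ⟨⟨hg, hi⟩, hl⟩ := H
  refine ⟨⟨hg.dL, fun X hX => ?_⟩, fun X hX => ?_⟩
  · rw [io_dL hg, hl X hX, hi X hX, map_zero, sub_zero]
  · rw [lieD_dL hg, hl X hX, map_zero]

theorem relS_dK {W : WFam F g} (H : W ∈ relS h) : dK W ∈ relS h := by
  obtain ⟨⟨hg, hi⟩, hl⟩ := H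
  refine ⟨⟨hg.dK, fun X hX => ?_⟩, fun X hX => ?_⟩
  · rw [io_dK hg, hi X hX, map_zero, neg_zero]
  · rw [lieD_dK, hl X hX, map_zero]

theorem relS_dW {W : WFam F g} (H : W ∈ relS h) : dW W ∈ relS h :=
  (relS h).add_mem (relS_dL H) (relS_dK H)

theorem horS_io {W : WFam F g} (H : W ∈ horS h) (x : g) : io x W ∈ horS h :=
  ⟨H.1.io x, fun X hX => by rw [H.1.io_io, H.2 X hX, map_zero, neg_zero]⟩

theorem horS_ka {W : WFam F g} (H : W ∈ horS h) (x : g) : ka x W ∈ horS h :=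
  ⟨H.1.ka x, fun X hX => by rw [io_ka, H.2 X hX, map_zero]⟩

theorem der_zero_map {W : WFam F g} (H : Good W) : der (0 : g →ₗ[F] g) W = 0 := by
  funext i j v w
  have h1 : ∀ t, W i j (Function.update v t 0) w = 0 := fun t => by
    have := (H i j).smulv v t 0 0 w
    simpa using this
  have h2 : ∀ t, W i j v (Function.update w t 0) = 0 := fun t => by
    have := (H i j).smulw v w t 0 0
    simpa using this
  simp [der, h1, h2]

theorem horS_der {p : g →ₗ[F] g} (hp0 : ∀ X ∈ h, p X = 0) {W : WFam F g} (H : W ∈ horS h) :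
    der p W ∈ horS h :=
  ⟨H.1.der p, fun X hX => by rw [io_der, H.2 X hX, hp0 X hX, H.1.io_zero, map_zero, add_zero]⟩

theorem relS_der {p : g →ₗ[F] g} (hp0 : ∀ X ∈ h, p X = 0)
    (hpc : ∀ X ∈ h, ∀ y, p ⁅X, y⁆ = ⁅X, p y⁆) {W : WFam F g} (H : W ∈ relS h) :
    der p W ∈ relS h := by
  refine ⟨horS_der hp0 H.1, fun X hX => ?_⟩
  have := der_comm H.1.1 p (LieAlgebra.ad F g X) 0 (fun x => by simp [hpc X hX])
  have e : ∀ (W : WFam F g), lieD X W = - der (LieAlgebra.ad F g X) W := fun _ => rfl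
  have e1 : der (LieAlgebra.ad F g X) W = 0 := by
    have := H.2 X hX
    rw [e] at this; exact neg_eq_zero.mp this
  rw [e1, der_zero_map H.1.1, map_zero, sub_zero, neg_zero] at this
  rw [e, this, neg_zero]

theorem relS_sH {p : g →ₗ[F] g} (hp0 : ∀ X ∈ h, p X = 0)
    (hpc : ∀ X ∈ h, ∀ y, p ⁅X, y⁆ = ⁅X, p y⁆) {W : WFam F g} (H : W ∈ relS h) :
    sH p W ∈ relS h := by
  obtain ⟨⟨hg, hi⟩, hl⟩ := H
  refine ⟨⟨hg.sH p, fun X hX => ?_⟩, fun X hX => ?_⟩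
  · rw [io_sH, hi X hX, hp0 X hX, hg.ka_zero, map_zero, sub_zero]
  · have := hl X hX
    simp only [lieD, LinearMap.neg_apply, neg_eq_zero] at this ⊢
    rw [der_sH _ _ _ (hpc X hX), this, map_zero]

theorem io_proj {p : g →ₗ[F] g} (hph : ∀ x, x - p x ∈ h) {W : WFam F g} (H : W ∈ horS h)
    (x : g) : io (p x) W = io x W := by
  have := H.2 _ (hph x)
  rw [H.1.io_sub, sub_eq_zero] at this
  exact this.symm

theorem homotopy {p : g →ₗ[F] g} (hph : ∀ x, x - p x ∈ h) {W : WFam F g} (H : W ∈ horS h) :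
    dK (sH p W) + sH p (dK W) = der p W := by
  funext k
  induction k generalizing W with
  | zero =>
    funext j
    induction j generalizing W with
    | zero => simp [der_zero_zero]
    | succ j ih =>
      refine ka_ext fun x => ?_
      have e := ih (horS_ka H x)
      simp only [Pi.add_apply] at e
      simp only [map_add, ka_der, ka_dK, ka_sH H.1, ka_sH H.1.dK, io_sH, Pi.add_apply, ← e,
        Pi.sub_apply]
      abel
  | succ k ih =>
    funext j
    refine io_ext fun x => ?_
    have e := congrFun (ih (horS_io H x)) j
    simp only [Pi.add_apply] at e
    simp only [map_add, io_der, io_dK H.1, io_dK (H.1.sH p), ka_dK, io_sH, Pi.add_apply, ← e,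
      Pi.sub_apply, map_sub, map_neg, Pi.neg_apply, io_proj hph H]
    abel

theorem ka_split {W : WFam F g} (H : Good W) (p : g →ₗ[F] g) (x : g) :
    ka x W = ka (p x) W + ka (x - p x) W := by
  rw [← H.ka_add]; congr 1; simp

theorem proj_idem {p : g →ₗ[F] g} (hp0 : ∀ X ∈ h, p X = 0) (hph : ∀ x, x - p x ∈ h) (x : g) :
    p (p x) = p x := by
  have := hp0 _ (hph x)
  rw [map_sub, sub_eq_zero] at this
  exact this.symm

theorem ka_q_V {p : g →ₗ[F] g} (hp0 : ∀ X ∈ h, p X = 0) (hph : ∀ x, x - p x ∈ h)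
    {W : WFam F g} (H : W ∈ horS h) (x : g) (a : F) (n : ℕ) :
    ka (p x) (pOp (der p) (qPoly a n) W) = pOp (der p) (qPoly (a - 1) n) (ka (p x) W) :=
  pOp_shift (der p) (ka (p x)) (horS h) (fun _ hc => horS_der hp0 hc) 1
    (fun c _ => by rw [ka_der, proj_idem hp0 hph, one_smul]) a n H

theorem ka_q_h {p : g →ₗ[F] g} (hp0 : ∀ X ∈ h, p X = 0)
    {W : WFam F g} (H : W ∈ horS h) (x : g) (hx : x ∈ h) (a : F) (n : ℕ) :
    ka x (pOp (der p) (qPoly a n) W) = pOp (der p) (qPoly a n) (ka x W) := by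
  have := pOp_shift (der p) (ka x) (horS h) (fun _ hc => horS_der hp0 hc) 0
    (fun c hc => by rw [ka_der, hp0 x hx, hc.1.ka_zero, zero_smul]) a n H
  rwa [sub_zero] at this

theorem annih_zero {p : g →ₗ[F] g} (hp0 : ∀ X ∈ h, p X = 0) (hph : ∀ x, x - p x ∈ h)
    (j : ℕ) {W : WFam F g} (H : W ∈ horS h) :
    pOp (der p) (qPoly 0 (j+1)) W 0 j = 0 := by
  induction j generalizing W with
  | zero =>
    rw [qPoly_succ, qPoly_zero, mul_one, pOp_lin]
    simp [der_zero_zero]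
  | succ j ih =>
    refine ka_ext (W' := 0) fun x => ?_
    have hm := pOp_mem (der p) (horS h) (fun _ hc => horS_der hp0 hc) (qPoly 0 (j+1+1)) H
    rw [ka_split hm.1 p x, ka_q_V hp0 hph H, ka_q_h hp0 H _ (hph x), zero_sub, qPoly_succ' (-1),
      neg_add_cancel, qPoly_succ 0 (j+1), pOp_mul, pOp_mul, Pi.add_apply, Pi.add_apply,
      pOp_der_zero _ _ (ih (horS_ka H _)), pOp_der_zero _ _ (ih (horS_ka H _)), map_zero]
    simp

theorem annih {p : g →ₗ[F] g} (hp0 : ∀ X ∈ h, p X = 0) (hph : ∀ x, x - p x ∈ h)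
    (i j : ℕ) {W : WFam F g} (H : W ∈ horS h) :
    pOp (der p) (qPoly (i : F) (j+1)) W i j = 0 := by
  induction i generalizing W with
  | zero => rw [Nat.cast_zero]; exact annih_zero hp0 hph j H
  | succ i ih =>
    refine io_ext (W' := 0) fun x => ?_
    rw [pOp_shift (der p) (io x) (horS h) (fun _ hc => horS_der hp0 hc) 1
      (fun c hc => by rw [io_der, io_proj hph hc, one_smul]) _ _ H, Nat.cast_succ,
      add_sub_cancel_right, ih (horS_io H x), map_zero]
    rfl

theorem annih_one {p : g →ₗ[F] g} (hp0 : ∀ X ∈ h, p X = 0) (hph : ∀ x, x - p x ∈ h)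
    (j : ℕ) {W : WFam F g} (H : W ∈ horS h)
    (hh : ∀ v w, (∀ r, w r ∈ h) → W 0 j v w = 0) :
    pOp (der p) (qPoly 1 j) W 0 j = 0 := by
  induction j generalizing W with
  | zero =>
    rw [qPoly_zero, pOp_one]
    funext v w
    exact hh v w (fun r => r.elim0)
  | succ j ih =>
    refine ka_ext (W' := 0) fun x => ?_
    have hm := pOp_mem (der p) (horS h) (fun _ hc => horS_der hp0 hc) (qPoly 1 (j+1)) H
    have e : ∀ v w, (∀ r, w r ∈ h) → ka (x - p x) W 0 j v w = 0 := by
      intro v w hw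
      refine hh v _ (fun r => ?_)
      refine Fin.cases ?_ (fun r => ?_) r
      · exact hph x
      · exact hw r
    rw [ka_split hm.1 p x, ka_q_V hp0 hph H, ka_q_h hp0 H _ (hph x), sub_self,
      qPoly_succ 1 j, pOp_mul, Pi.add_apply, Pi.add_apply, annih_zero hp0 hph j (horS_ka H _),
      pOp_der_zero _ _ (ih (horS_ka H _) e), map_zero]
    simp

theorem exists_annih [CharZero F] {p : g →ₗ[F] g} (hp0 : ∀ X ∈ h, p X = 0)
    (hph : ∀ x, x - p x ∈ h) (m J : ℕ) {T : WFam F g} (H : T ∈ horS h)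
    (hT : ∀ i j, ¬ (j = J ∧ i + 2 * J = m) → T i j = 0)
    (hh : ∀ v w, (∀ r, w r ∈ h) → T 0 J v w = 0) :
    ∃ f : Polynomial F, f.coeff 0 ≠ 0 ∧ pOp (der p) f T = 0 := by
  by_cases hm : 2 * J ≤ m
  · have key : ∀ f : Polynomial F, pOp (der p) f T (m - 2 * J) J = 0 →
        pOp (der p) f T = 0 := by
      intro f hf
      funext i j
      by_cases hij : j = J ∧ i + 2 * J = m
      · obtain ⟨rfl, h2⟩ := hij
        have : i = m - 2 * j := by omega
        subst this
        exact hf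
      · exact pOp_der_zero _ _ (hT i j hij)
    by_cases hi : m - 2 * J = 0
    · refine ⟨qPoly 1 J, ?_, key _ ?_⟩
      · have := qPoly_coeff (F := F) 1 J one_ne_zero
        simpa using this
      · rw [hi]; exact annih_one hp0 hph J H hh
    · exact ⟨qPoly ((m - 2 * J : ℕ) : F) (J+1), qPoly_coeff _ _ hi, key _ (annih hp0 hph _ _ H)⟩
  · refine ⟨1, by simp, ?_⟩
    rw [pOp_one]
    funext i j
    exact hT i j (by omega)

theorem exists_prim [CharZero F] {p : g →ₗ[F] g} (hp0 : ∀ X ∈ h, p X = 0)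
    (hph : ∀ x, x - p x ∈ h) (hpc : ∀ X ∈ h, ∀ y, p ⁅X, y⁆ = ⁅X, p y⁆)
    (m J : ℕ) {T : WFam F g} (H : T ∈ relS h)
    (hT : ∀ i j, ¬ (j = J ∧ i + 2 * J = m) → T i j = 0)
    (hh : ∀ v w, (∀ r, w r ∈ h) → T 0 J v w = 0) (hd : dK T = 0) :
    ∃ U ∈ relS h, (∀ i j, ¬ (j + 1 = J ∧ i + 2 * j + 1 = m) → U i j = 0) ∧ dK U = T := by
  obtain ⟨f, hf0, hf⟩ := exists_annih hp0 hph m J H.1 hT hh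
  have h1 := homotopy hph H.1
  rw [hd, map_zero, add_zero] at h1
  rw [← Polynomial.divX_mul_X_add f, pOp_add, pOp_mul, pOp_X, pOp_C, ← h1,
    pOp_comm _ _ (fun c => der_dK c p)] at hf
  refine ⟨-(f.coeff 0)⁻¹ • pOp (der p) f.divX (sH p T), ?_, ?_, ?_⟩
  · exact (relS h).smul_mem _ (pOp_mem _ _ (fun _ hc => relS_der hp0 hpc hc) _ (relS_sH hp0 hpc H))
  · intro i j hij
    have : sH p T i j = 0 := by
      cases i with
      | zero => rfl
      | succ i =>
        have : T i (j+1) = 0 := hT _ _ (by omega)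
        funext v w
        simp [sH, this]
    rw [Pi.smul_apply, Pi.smul_apply, pOp_der_zero _ _ this, smul_zero]
  · rw [map_smul, eq_neg_of_add_eq_zero_left hf, neg_smul_neg, smul_smul, inv_mul_cancel₀ hf0,
      one_smul]

theorem exactness [CharZero F] {p : g →ₗ[F] g} (hp0 : ∀ X ∈ h, p X = 0)
    (hph : ∀ x, x - p x ∈ h) (hpc : ∀ X ∈ h, ∀ y, p ⁅X, y⁆ = ⁅X, p y⁆)
    (m J : ℕ) {W : WFam F g} (H : W ∈ relS h)
    (hdeg : ∀ i j, i + 2 * j ≠ m → W i j = 0) (hJ : ∀ i j, J ≤ j → W i j = 0)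
    (hd : dW W = 0) (hh : ∀ j v w, (∀ r, w r ∈ h) → W 0 j v w = 0) :
    ∃ W' ∈ relS h, (∀ i j, i + 2 * j + 1 ≠ m → W' i j = 0) ∧
      (∀ i j, J ≤ j + 1 → W' i j = 0) ∧ dW W' = W := by
  induction J generalizing W with
  | zero =>
    refine ⟨0, (relS h).zero_mem, fun _ _ _ => rfl, fun _ _ _ => rfl, ?_⟩
    rw [map_zero]
    funext i j
    exact (hJ i j (Nat.zero_le j)).symm
  | succ J ih =>
    let T : WFam F g := fun i j => if j = J then W i j else 0
    have hTdef : ∀ i j, T i j = if j = J then W i j else 0 := fun _ _ => rfl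
    have hT : T ∈ relS h := by
      rw [mem_relS]
      intro i j
      rw [hTdef]
      split_ifs
      · exact mem_relS.mp H i j
      · exact mem_relS.mp (relS h).zero_mem i j
    have hT0 : ∀ i j, ¬ (j = J ∧ i + 2 * J = m) → T i j = 0 := by
      intro i j hij
      rw [hTdef]
      split_ifs with hj
      · exact hdeg i j (by omega)
      · rfl
    have hTh : ∀ j v w, (∀ r, w r ∈ h) → T 0 j v w = 0 := by
      intro j v w hw
      rw [hTdef]
      split_ifs
      · exact hh j v w hw
      · rfl
    have hTd : dK T = 0 := by
      funext i j
      cases j with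
      | zero => rfl
      | succ j =>
        have e : dK T i (j+1) = dKoszul F g i j (T (i+1) j) := rfl
        by_cases hj : j = J
        · subst hj
          rw [e, hTdef, if_pos rfl]
          have e2 := congrFun (congrFun hd i) (j+1)
          rw [dW_apply, Pi.add_apply, Pi.add_apply] at e2
          have e3 : dL W i (j+1) = 0 := by
            cases i with
            | zero => rfl
            | succ i =>
              funext v w
              simp [dL, dLieS, hJ i (j+1) le_rfl]
          rw [e3, zero_add] at e2
          exact e2
        · rw [e, hTdef, if_neg hj]
          funext v w
          simp [dKoszul]
    obtain ⟨U, hU, hU0, hUd⟩ := exists_prim hp0 hph hpc m J hT hT0 (hTh J) hTd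
    have hdU : ∀ i j, (∀ i', i' + 1 = i → U i' j = 0) → dL U i j = 0 := by
      intro i j hU'
      cases i with
      | zero => rfl
      | succ i =>
        funext v w
        simp [dL, dLieS, hU' i rfl]
    obtain ⟨W', hW', hW'1, hW'2, hW'3⟩ := ih (W := W - dW U)
      ((relS h).sub_mem H (relS_dW hU))
      (fun i j hij => by
        rw [Pi.sub_apply, Pi.sub_apply, dW_apply, Pi.add_apply, Pi.add_apply, hUd, hdeg i j hij,
          hT0 i j (by omega), hdU i j (fun i' hi' => hU0 _ _ (by omega))]
        simp)
      (fun i j hj => by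
        rw [Pi.sub_apply, Pi.sub_apply, dW_apply, Pi.add_apply, Pi.add_apply, hUd,
          hdU i j (fun i' hi' => hU0 _ _ (by omega)), hTdef]
        split_ifs with hjJ
        · simp
        · rw [hJ i j (by omega)]; simp)
      (by rw [map_sub, hd, dW_dW hU.1.1, sub_zero])
      (fun j v w hw => by
        simp only [Pi.sub_apply, dW_apply, Pi.add_apply, hUd, dL_zero, hh j v w hw,
          hTh j v w hw, Pi.zero_apply]
        simp)
    refine ⟨U + W', (relS h).add_mem hU hW', fun i j hij => ?_, fun i j hij => ?_, ?_⟩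
    · rw [Pi.add_apply, Pi.add_apply, hW'1 i j hij, hU0 i j (by omega), add_zero]
    · rw [Pi.add_apply, Pi.add_apply, hW'2 i j (by omega), hU0 i j (by omega), add_zero]
    · rw [map_add, hW'3]; abel

end Rel

/-- The family concentrated in bidegree `(0, n)` given by `Q` composed with `q`. -/
def extQ (n : ℕ) (Q : (Fin n → g) → F) (q : g → g) : WFam F g :=
  fun i j _ w => if e : i = 0 ∧ j = n then Q (fun r => q (w (Fin.cast e.2.symm r))) else 0

theorem extQ_mem {h : LieSubalgebra F g} {n : ℕ} {Q : (Fin n → g) → F}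
    (hQ : IsSymPoly F g h n Q) (q : g →ₗ[F] g) (hq : ∀ x, q x ∈ h)
    (hqc : ∀ X ∈ h, ∀ y, q ⁅X, y⁆ = ⁅X, q y⁆) : extQ n Q q ∈ relS h := by
  rw [mem_relS]
  intro i j
  by_cases e : i = 0 ∧ j = n
  · obtain ⟨rfl, rfl⟩ := e
    have e : extQ j Q q 0 j = fun _ w => Q (fun r => q (w r)) := by
      funext v w
      simp [extQ]
    have hu : ∀ (w : Fin j → g) r x, (fun s => q (Function.update w r x s))
        = Function.update (fun s => q (w s)) r (q x) := by
      intro w r x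
      funext s
      rcases eq_or_ne s r with rfl | hs
      · simp
      · simp [Function.update_of_ne hs]
    obtain ⟨h1, h2, h3, h4⟩ := hQ
    rw [e]
    refine ⟨fun v t => t.elim0, fun v t => t.elim0, fun v t => t.elim0, ?_, ?_, ?_,
      fun v t => t.elim0, ?_⟩
    · intro v w r x y
      simp only [hu, map_add, h1]
    · intro v w r s x
      simp only [hu, map_smul, h2]
    · intro v w ρ
      exact h3 (fun r => q (w r)) ρ
    · intro X hX v w
      simp only [hu, hqc X hX]
      rw [Finset.univ_eq_empty, Finset.sum_empty, zero_add]
      exact h4 X hX (fun r => q (w r)) (fun r => hq _)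
  · have : extQ n Q q i j = 0 := by
      funext v w
      simp [extQ, dif_neg e]
    rw [this]
    exact mem_relS.mp (relS h).zero_mem i j

end WeilProof


/-- let `g` be a Lie algebra over a field of characteristic zero and
`h ⊂ g` a finite-dimensional subalgebra with an `ad(h)`-invariant complement. Then
`H^m(W(g,h)) = 0` for odd `m`, and for every `j ≥ 0` the restriction
`W^{0,j}(g,h) = (S^j g)^{*h} → (S^j h)^{*h}` induces an isomorphism
`H^{2j}(W(g,h)) ≅ (S^j h)^{*h}`. -/
theorem weil_algebra_cohomology (F : Type*) [Field F] [CharZero F]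
    (g : Type*) [LieRing g] [LieAlgebra F g]
    (h : LieSubalgebra F g) [FiniteDimensional F h]
    (V : Submodule F g) (hV : ∀ X ∈ h, ∀ v ∈ V, ⁅X, v⁆ ∈ V)
    (hcompl : IsCompl h.toSubmodule V) :
    -- odd-degree cohomology vanishes:
    (∀ m : ℕ, Odd (m+1) → ∀ W, IsWElt F g h (m+1) W → (∀ i j, dWeil F g W i j = 0) →
      ∃ W', IsWElt F g h m W' ∧ dWeil F g W' = W) ∧
    -- in even degrees `2j`, `W ↦ (W 0 j)|_{h-tuples}` induces an isomorphism
    -- `H^{2j}(W(g,h)) ≅ (S^j h)^{*h}`: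
    (∀ j : ℕ,
      (∀ W, IsWElt F g h (2*j) W → IsWCobd F g h (2*j) W →
        ∀ w : Fin j → g, (∀ r, w r ∈ h) → W 0 j Fin.elim0 w = 0) ∧
      (∀ W, IsWElt F g h (2*j) W → (∀ i j', dWeil F g W i j' = 0) →
        (∀ w : Fin j → g, (∀ r, w r ∈ h) → W 0 j Fin.elim0 w = 0) →
        IsWCobd F g h (2*j) W) ∧
      (∀ Q : (Fin j → g) → F, IsSymPoly F g h j Q →
        ∃ W, IsWElt F g h (2*j) W ∧ (∀ i j', dWeil F g W i j' = 0) ∧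
          ∀ w : Fin j → g, (∀ r, w r ∈ h) → W 0 j Fin.elim0 w = Q w)) := by
  classical
  obtain ⟨p, hp0, hph, hpc⟩ : ∃ p : g →ₗ[F] g, (∀ X ∈ h, p X = 0) ∧ (∀ x, x - p x ∈ h) ∧
      (∀ X ∈ h, ∀ y, p ⁅X, y⁆ = ⁅X, p y⁆) := by
    have hex : ∀ y : g, ∃ a ∈ h, ∃ b ∈ V, a + b = y := fun y =>
      Submodule.mem_sup.mp (hcompl.sup_eq_top ▸ Submodule.mem_top : y ∈ h.toSubmodule ⊔ V)
    let π := V.linearProjOfIsCompl h.toSubmodule hcompl.symm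
    have hπh : ∀ X ∈ h, V.subtype (π X) = 0 := by
      intro X hX
      have : π X = 0 := Submodule.linearProjOfIsCompl_apply_right hcompl.symm ⟨X, hX⟩
      rw [this]; simp
    have hπV : ∀ b ∈ V, V.subtype (π b) = b := by
      intro b hb
      have : π b = ⟨b, hb⟩ := Submodule.linearProjOfIsCompl_apply_left hcompl.symm ⟨b, hb⟩
      rw [this]; rfl
    refine ⟨V.subtype ∘ₗ π, hπh, fun x => ?_, fun X hX y => ?_⟩
    · obtain ⟨a, ha, b, hb, rfl⟩ := hex x
      rw [LinearMap.comp_apply, map_add, map_add, hπh a ha, hπV b hb, zero_add, add_sub_cancel_right]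
      exact ha
    · obtain ⟨a, ha, b, hb, rfl⟩ := hex y
      simp only [LinearMap.comp_apply, lie_add, map_add]
      rw [hπh a ha, hπV b hb, hπh _ (h.lie_mem hX ha), hπV _ (hV X hX b hb), lie_zero]
  have conv : ∀ {m : ℕ} {W : WFam F g}, W ∈ relS h → (∀ i j, i + 2 * j ≠ m → W i j = 0) →
      IsWElt F g h m W := fun H h0 => ⟨mem_relS.mp H, h0⟩
  refine ⟨?_, fun j => ⟨?_, ?_, ?_⟩⟩
  · intro m hm W hW hd
    obtain ⟨W', h1, h2, -, h4⟩ := exactness hp0 hph hpc (m+1) (m+2) (mem_relS.mpr hW.1) hW.2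
      (fun i j hj => hW.2 i j (by omega)) (by funext i j; exact hd i j)
      (fun j v w _ => by
        rw [hW.2 0 j (by rintro e; rw [← e] at hm; rw [zero_add] at hm; exact
          (Nat.not_odd_iff_even.mpr (even_two_mul j)) hm)]
        rfl)
    exact ⟨W', conv h1 (fun i j hij => h2 i j (by omega)), h4⟩
  · intro W hW hc w hw
    cases j with
    | zero =>
      have : W 0 0 = 0 := hc 0 0
      rw [this]; rfl
    | succ j =>
      obtain ⟨W', hW', rfl⟩ : ∃ W', IsWElt F g h (2 * j + 1) W' ∧ dWeil F g W' = W := hc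
      have e : dWeil F g W' 0 (j+1) = 0 + dKoszul F g 0 j (W' 1 j) := rfl
      rw [e, zero_add]
      obtain ⟨-, -, -, -, -, -, h7, -⟩ := hW'.1 1 j
      refine Finset.sum_eq_zero fun r _ => ?_
      exact h7 _ 0 _ (hw r)
  · intro W hW hd hh
    obtain ⟨W', h1, h2, -, h4⟩ := exactness hp0 hph hpc (2 * j) (2 * j + 1) (mem_relS.mpr hW.1)
      hW.2 (fun i j hj => hW.2 i j (by omega)) (by funext i j; exact hd i j)
      (fun j' v w hw => by
        by_cases hj : j' = j
        · subst hj
          rw [Subsingleton.elim v Fin.elim0]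
          exact hh w hw
        · rw [hW.2 0 j' (by omega)]; rfl)
    cases j with
    | zero =>
      have : W' = 0 := by
        funext i j; exact h2 i j (by omega)
      rw [this, map_zero] at h4
      intro i j
      rw [← h4]; rfl
    | succ j =>
      have hfin : ∃ W', IsWElt F g h (2 * j + 1) W' ∧ dWeil F g W' = W :=
        ⟨W', conv (m := 2 * j + 1) h1 (fun i j' hij => h2 i j' (by omega)), h4⟩
      exact hfin
  · intro Q hQ
    have hm : extQ j Q (LinearMap.id - p : g →ₗ[F] g) ∈ relS h :=
      extQ_mem hQ _ (fun x => hph x) (fun X hX y => by simp [hpc X hX])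
    generalize hW0 : extQ j Q (LinearMap.id - p : g →ₗ[F] g) = W0 at hm
    have hz : ∀ i j', ¬ (i = 0 ∧ j' = j) → W0 i j' = 0 := by
      intro i j' hij
      rw [← hW0]
      funext v w
      simp [extQ, dif_neg hij]
    have hK : dK W0 = 0 := by
      funext i j'
      cases j' with
      | zero => rfl
      | succ j' =>
        have e : dK W0 i (j'+1) = dKoszul F g i j' (W0 (i+1) j') := rfl
        rw [e, hz _ _ (by omega)]
        funext v w
        simp [dKoszul]
    have hdW : dW W0 = dL W0 := by rw [dW_apply, hK, add_zero]
    have hLz : ∀ i j', ¬ (i = 1 ∧ j' = j) → dW W0 i j' = 0 := by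
      intro i j' hij
      rw [hdW]
      cases i with
      | zero => rfl
      | succ i =>
        funext v w
        simp [dL, dLieS, hz i j' (by omega)]
    obtain ⟨W', h1, h2, h3, h4⟩ := exactness hp0 hph hpc (2 * j + 1) (j + 1) (relS_dW hm)
      (fun i j' hij => hLz _ _ (by omega)) (fun i j' hij => hLz _ _ (by omega))
      (dW_dW hm.1.1) (fun j' v w _ => by rw [hLz 0 j' (by omega)]; rfl)
    refine ⟨W0 - W', conv ((relS h).sub_mem hm h1) (fun i j' hij => ?_), fun i j' => ?_, ?_⟩
    · rw [Pi.sub_apply, Pi.sub_apply, hz _ _ (by omega), h2 _ _ (by omega), sub_zero]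
    · have : dW (W0 - W') = 0 := by rw [map_sub, h4, sub_self]
      exact congrFun (congrFun this i) j'
    · intro w hw
      rw [Pi.sub_apply, Pi.sub_apply, h3 0 j le_rfl, sub_zero, ← hW0]
      simp only [extQ, and_self, dif_pos, Fin.cast_eq_self]
      congr 1
      funext r
      simp [hp0 _ (hw r)]

end
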